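/- arXiv:2203.16623 — 5 statements merged into one kernel-verified Lean document; each statement's English description precedes it below -/
import Mathlib

section
/- Suppose the graph sequence {𝔾(t)} of the column stochastic matrix sequence {W(t)} is uniformly strongly connected. Let y(t+1) = W(t) y(t), y(0) = 𝟙, and S(t)_{ij} = W(t)_{ij} y_j(t) / y_i(t+1). Then for every fixed τ ≥ 0, the product S(t)⋯S(τ+1)S(τ) converges, as t → ∞, to the rank-one matrix (1/n) 𝟙 y(τ)ᵀ; that is, for all i, j: lim_{t→∞} [Φ_S(t+1,τ)]_{ij} = y_j(τ)/n, where Φ_S(t,τ) = S(t−1)⋯S(τ). -/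
open Filter Finset

/-- `matProd M τ k = M (τ+k-1) * ⋯ * M (τ+1) * M τ` (the product of `k` factors),
i.e. the state-transition matrix `Φ_M (τ+k, τ)`. -/
def matProd {n : ℕ} (M : ℕ → Matrix (Fin n) (Fin n) ℝ) (τ : ℕ) : ℕ → Matrix (Fin n) (Fin n) ℝ
  | 0 => 1
  | k + 1 => M (τ + k) * matProd M τ k

lemma aux_add {n : ℕ} (M : ℕ → Matrix (Fin n) (Fin n) ℝ) (τ k m : ℕ) :
    matProd M τ (k + m) = matProd M (τ + k) m * matProd M τ k := by
  induction m with
  | zero => simp [matProd]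
  | succ m ih =>
    rw [← add_assoc]
    simp only [matProd]
    rw [ih, Matrix.mul_assoc, add_assoc]

lemma aux_contr {n : ℕ} (A : Matrix (Fin n) (Fin n) ℝ) (c B s : ℝ) (d y : Fin n → ℝ)
    (hA : ∀ i j, c ≤ A i j) (hd : ∑ i, d i = 0) (hy : ∑ i, y i = s)
    (h : ∀ i, |d i| ≤ B * y i) (i : Fin n) :
    |∑ l, A i l * d l| ≤ B * (∑ l, A i l * y l - c * s) := by
  have h1 : ∑ l, A i l * d l = ∑ l, (A i l - c) * d l := by
    simp only [sub_mul, Finset.sum_sub_distrib, ← Finset.mul_sum, hd]; simp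
  have h2 : B * (∑ l, A i l * y l - c * s) = ∑ l, (A i l - c) * (B * y l) := by
    rw [← hy, Finset.mul_sum, ← Finset.sum_sub_distrib, Finset.mul_sum]
    exact Finset.sum_congr rfl fun l _ => by ring
  rw [h1, h2]
  refine (Finset.abs_sum_le_sum_abs _ _).trans (Finset.sum_le_sum fun l _ => ?_)
  rw [abs_mul, abs_of_nonneg (sub_nonneg.2 (hA i l))]
  exact mul_le_mul_of_nonneg_left (h l) (sub_nonneg.2 (hA i l))

section
variable {n : ℕ} {W : ℕ → Matrix (Fin n) (Fin n) ℝ}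

lemma aux_nonneg (hWnonneg : ∀ t i j, 0 ≤ W t i j) (t k : ℕ) (i j : Fin n) :
    0 ≤ matProd W t k i j := by
  induction k generalizing i with
  | zero => simp only [matProd, Matrix.one_apply]; split_ifs <;> norm_num
  | succ k ih =>
    simp only [matProd, Matrix.mul_apply]
    exact Finset.sum_nonneg fun l _ => mul_nonneg (hWnonneg _ _ _) (ih l)

lemma aux_step (hWnonneg : ∀ t i j, 0 ≤ W t i j) (t k : ℕ) (i l j : Fin n)
    (h1 : 0 < W (t + k) i l) (h2 : 0 < matProd W t k l j) : 0 < matProd W t (k + 1) i j := by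
  simp only [matProd, Matrix.mul_apply]
  exact Finset.sum_pos' (fun l _ => mul_nonneg (hWnonneg _ _ _) (aux_nonneg hWnonneg _ _ _ _))
    ⟨l, Finset.mem_univ _, mul_pos h1 h2⟩

lemma aux_mono (hWnonneg : ∀ t i j, 0 ≤ W t i j) (hWdiag : ∀ t i, 0 < W t i i)
    (t k m : ℕ) (i j : Fin n)
    (h2 : 0 < matProd W t k i j) : 0 < matProd W t (k + m) i j := by
  induction m with
  | zero => exact h2
  | succ m ih => exact aux_step hWnonneg t (k + m) i i j (hWdiag _ _) ih

lemma aux_beta (hWnonneg : ∀ t i j, 0 ≤ W t i j) (β : ℝ) (hβ : 0 < β)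
    (hWβ : ∀ t i j, 0 < W t i j → β ≤ W t i j) (t k : ℕ) (i j : Fin n)
    (h : 0 < matProd W t k i j) : β ^ k ≤ matProd W t k i j := by
  induction k generalizing i with
  | zero =>
    simp only [matProd, Matrix.one_apply] at h ⊢
    split_ifs at h ⊢ <;> simp_all
  | succ k ih =>
    simp only [matProd, Matrix.mul_apply] at h ⊢
    have h0 : ∀ l ∈ (Finset.univ : Finset (Fin n)), 0 ≤ W (t + k) i l * matProd W t k l j :=
      fun l _ => mul_nonneg (hWnonneg _ _ _) (aux_nonneg hWnonneg _ _ _ _)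
    obtain ⟨l, hl, hp⟩ := (Finset.sum_pos_iff_of_nonneg h0).1 h
    have ha : 0 < W (t + k) i l := (hWnonneg _ _ _).lt_of_ne (by rintro h; simp [← h] at hp)
    have hb : 0 < matProd W t k l j :=
      (aux_nonneg hWnonneg _ _ _ _).lt_of_ne (by rintro h; simp [← h] at hp)
    refine le_trans ?_ (Finset.single_le_sum h0 hl)
    rw [pow_succ']
    exact mul_le_mul (hWβ _ _ _ ha) (ih l hb) (by positivity) ha.le

lemma aux_pos (hWnonneg : ∀ t i j, 0 ≤ W t i j) (hWdiag : ∀ t i, 0 < W t i i)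
    (L : ℕ)
    (hUSC : ∀ t : ℕ, ∀ i j : Fin n,
      Relation.TransGen (fun u v : Fin n => ∃ k ∈ Finset.Ico t (t + L), 0 < W k v u) i j)
    (t : ℕ) (i j : Fin n) : 0 < matProd W t (n * L) i j := by
  classical
  let R : ℕ → Finset (Fin n) := fun k => Finset.univ.filter fun i => 0 < matProd W t k i j
  have key : ∀ m : ℕ, m ≤ (R (m * L)).card ∨ R (m * L) = Finset.univ := by
    intro m
    induction m with
    | zero => simp
    | succ m ih =>
      have hsub : R (m * L) ⊆ R ((m + 1) * L) := by
        intro i hi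
        simp only [R, Finset.mem_filter, Finset.mem_univ, true_and] at hi ⊢
        rw [Nat.succ_mul]
        exact aux_mono hWnonneg hWdiag _ _ _ _ _ hi
      rcases ih with ih | ih
      · by_cases heq : R (m * L) = R ((m + 1) * L)
        · right
          rw [← heq]
          have hj : 0 < matProd W t (m * L) j j := by
            have := aux_mono hWnonneg hWdiag t 0 (m * L) j j (by simp [matProd])
            simpa using this
          ext v
          simp only [Finset.mem_univ, iff_true]
          have hT := hUSC (t + m * L) j v
          have hclosed : ∀ u v : Fin n,
              (∃ k ∈ Finset.Ico (t + m * L) (t + m * L + L), 0 < W k v u) →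
              u ∈ R (m * L) → v ∈ R (m * L) := by
            rintro u v ⟨k, hk, hw⟩ hu
            rw [Finset.mem_Ico] at hk
            obtain ⟨s, rfl⟩ := Nat.exists_eq_add_of_le hk.1
            rw [heq]
            simp only [R, Finset.mem_filter, Finset.mem_univ, true_and] at hu ⊢
            have h1 := aux_mono hWnonneg hWdiag t _ s u j hu
            rw [add_assoc] at hw
            have h2 := aux_step hWnonneg t _ v u j hw h1
            have h3 := aux_mono hWnonneg hWdiag t _ (L - (s + 1)) v j h2
            have : m * L + s + 1 + (L - (s + 1)) = (m + 1) * L := by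
              rw [Nat.succ_mul]; omega
            rwa [this] at h3
          have hj' : j ∈ R (m * L) := by simpa [R] using hj
          induction hT with
          | single h => exact hclosed _ _ h hj'
          | tail _ h ih => exact hclosed _ _ h ih
        · left
          exact lt_of_le_of_lt ih (Finset.card_lt_card (Finset.ssubset_iff_subset_ne.2 ⟨hsub, heq⟩))
      · right
        exact Finset.univ_subset_iff.1 (ih ▸ hsub)
  have hu : R (n * L) = Finset.univ := by
    rcases key n with h | h
    · apply Finset.eq_univ_of_card
      apply le_antisymm (Finset.card_le_univ _)
      simpa using h
    · exact h
  have : i ∈ R (n * L) := hu ▸ Finset.mem_univ i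
  simpa [R] using this

end

theorem stmt_11
    (n : ℕ) (hn : 0 < n)
    (W : ℕ → Matrix (Fin n) (Fin n) ℝ)
    (hWnonneg : ∀ t i j, 0 ≤ W t i j)
    (hWcol : ∀ t j, ∑ i, W t i j = 1)
    (hWdiag : ∀ t i, 0 < W t i i)
    (β : ℝ) (hβ : 0 < β)
    (hWβ : ∀ t i j, 0 < W t i j → β ≤ W t i j)
    (L : ℕ) (hL : 0 < L)
    (hUSC : ∀ t : ℕ, ∀ i j : Fin n,
      Relation.TransGen (fun u v : Fin n => ∃ k ∈ Finset.Ico t (t + L), 0 < W k v u) i j)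
    (y : ℕ → Fin n → ℝ)
    (hy0 : ∀ i, y 0 i = 1)
    (hyrec : ∀ t i, y (t + 1) i = ∑ j, W t i j * y t j)
    (S : ℕ → Matrix (Fin n) (Fin n) ℝ)
    (hS : ∀ t i j, S t i j = W t i j * y t j / y (t + 1) i)
    :
    ∀ τ : ℕ, ∀ i j : Fin n,
      Filter.Tendsto (fun k => matProd S τ k i j) Filter.atTop (nhds (y τ j / n)) := by
  intro τ i j
  have hnR : (0:ℝ) < n := by exact_mod_cast hn
  -- basic facts about y
  have hypos : ∀ t i, 0 < y t i := by
    intro t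
    induction t with
    | zero => intro i; rw [hy0]; norm_num
    | succ t ih =>
      intro i
      rw [hyrec]
      exact Finset.sum_pos' (fun l _ => mul_nonneg (hWnonneg _ _ _) (ih l).le)
        ⟨i, Finset.mem_univ _, mul_pos (hWdiag _ _) (ih i)⟩
  have hysum : ∀ t, ∑ i, y t i = n := by
    intro t
    induction t with
    | zero => simp [hy0]
    | succ t ih =>
      simp only [hyrec]
      rw [Finset.sum_comm, ← ih]
      refine Finset.sum_congr rfl fun l _ => ?_
      rw [← Finset.sum_mul, hWcol, one_mul]
  have hyle : ∀ t i, y t i ≤ n := by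
    intro t i
    rw [← hysum t]
    exact Finset.single_le_sum (fun l _ => (hypos t l).le) (Finset.mem_univ i)
  have hyP : ∀ t m i, y (t + m) i = ∑ l, matProd W t m i l * y t l := by
    intro t m
    induction m with
    | zero => intro i; simp [matProd, Matrix.one_apply]
    | succ m ih =>
      intro i
      rw [← add_assoc, hyrec]
      simp only [matProd, Matrix.mul_apply, ih, Finset.mul_sum, Finset.sum_mul]
      rw [Finset.sum_comm]
      exact Finset.sum_congr rfl fun _ _ => Finset.sum_congr rfl fun _ _ => by ring
  have hPcol : ∀ k, ∑ i, matProd W τ k i j = 1 := by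
    intro k
    induction k with
    | zero => simp [matProd, Matrix.one_apply]
    | succ k ih =>
      simp only [matProd, Matrix.mul_apply]
      rw [Finset.sum_comm, ← ih]
      refine Finset.sum_congr rfl fun l _ => ?_
      rw [← Finset.sum_mul, hWcol, one_mul]
  have hSP : ∀ k i, matProd S τ k i j = matProd W τ k i j * y τ j / y (τ + k) i := by
    intro k
    induction k with
    | zero =>
      intro i
      have := (hypos τ j).ne'
      simp only [matProd, Matrix.one_apply, add_zero]
      split_ifs with h
      · subst h; field_simp
      · simp
    | succ k ih =>
      intro i
      simp only [matProd, Matrix.mul_apply, ih, hS, Finset.sum_mul, Finset.sum_div]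
      refine Finset.sum_congr rfl fun l _ => ?_
      have h1 := (hypos (τ + k) l).ne'
      have h2 := (hypos (τ + k + 1) i).ne'
      rw [← add_assoc]
      field_simp
  set N := n * L with hN
  have hNpos : 0 < N := Nat.mul_pos hn hL
  set c := β ^ N with hc
  have hβ1 : β ≤ 1 := by
    rw [← hWcol 0 j]
    exact (hWβ 0 j j (hWdiag 0 j)).trans
      (Finset.single_le_sum (f := fun i => W 0 i j) (fun l _ => hWnonneg 0 l j) (Finset.mem_univ j))
  have hc0 : 0 < c := pow_pos hβ N
  have hc1 : c ≤ 1 := pow_le_one₀ hβ.le hβ1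
  have hPc : ∀ t i l, c ≤ matProd W t N i l := fun t i l =>
    aux_beta hWnonneg β hβ hWβ t N i l (aux_pos hWnonneg hWdiag L hUSC t i l)
  let d : ℕ → Fin n → ℝ := fun k i => matProd W τ k i j - y (τ + k) i / n
  have hdsum : ∀ k, ∑ i, d k i = 0 := by
    intro k
    simp only [d, Finset.sum_sub_distrib, hPcol, ← Finset.sum_div, hysum]
    rw [div_self hnR.ne', sub_self]
  have hdP : ∀ k m i, d (k + m) i = ∑ l, matProd W (τ + k) m i l * d k l := by
    intro k m i
    simp only [d, aux_add W τ k m, Matrix.mul_apply, mul_sub, Finset.sum_sub_distrib]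
    rw [← add_assoc, hyP (τ + k) m i, Finset.sum_div]
    simp only [mul_div_assoc]
  have hcontr : ∀ k m B c', (∀ i l, c' ≤ matProd W (τ + k) m i l) →
      (∀ i, |d k i| ≤ B * y (τ + k) i) →
      ∀ i, |d (k + m) i| ≤ B * (y (τ + (k + m)) i - c' * n) := by
    intro k m B c' hA h i
    rw [hdP, ← add_assoc, hyP (τ + k) m i]
    exact aux_contr _ c' B n _ _ hA (hdsum k) (hysum _) h i
  let B0 : ℝ := ∑ i, |d 0 i| / y τ i
  have hB0 : 0 ≤ B0 := Finset.sum_nonneg fun i _ => div_nonneg (abs_nonneg _) (hypos _ _).le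
  have hbase : ∀ i, |d 0 i| ≤ B0 * y (τ + 0) i := by
    intro i
    rw [add_zero, ← div_le_iff₀ (hypos _ _)]
    exact Finset.single_le_sum (f := fun i => |d 0 i| / y τ i)
      (fun i _ => div_nonneg (abs_nonneg _) (hypos _ _).le) (Finset.mem_univ i)
  have hbound : ∀ q r i, |d (r + q * N) i| ≤ ((1 - c) ^ q * B0) * y (τ + (r + q * N)) i := by
    intro q
    induction q with
    | zero =>
      intro r i
      have := hcontr 0 r B0 0 (fun i l => aux_nonneg hWnonneg _ _ _ _) hbase i
      simpa using this
    | succ q ih =>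
      intro r i
      have h := hcontr _ N _ c (hPc _) (ih r) i
      have e : r + (q + 1) * N = r + q * N + N := by ring
      rw [e]
      refine h.trans ?_
      have hB : 0 ≤ (1 - c) ^ q * B0 := mul_nonneg (pow_nonneg (by linarith) _) hB0
      rw [show (1 - c) ^ (q + 1) * B0 * y (τ + (r + q * N + N)) i
        = (1 - c) ^ q * B0 * ((1 - c) * y (τ + (r + q * N + N)) i) by ring]
      refine mul_le_mul_of_nonneg_left ?_ hB
      have := mul_le_mul_of_nonneg_left (hyle (τ + (r + q * N + N)) i) hc0.le
      linarith
  have hlim : Tendsto (fun k : ℕ => y τ j * ((1 - c) ^ (k / N) * B0)) atTop (nhds 0) := by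
    have h1 : Tendsto (fun k : ℕ => (1 - c) ^ (k / N)) atTop (nhds 0) :=
      (tendsto_pow_atTop_nhds_zero_of_lt_one (by linarith) (by linarith)).comp
        (Nat.tendsto_div_const_atTop hNpos.ne')
    simpa using (h1.mul_const B0).const_mul (y τ j)
  rw [tendsto_iff_dist_tendsto_zero]
  refine squeeze_zero (fun _ => dist_nonneg) (fun k => ?_) hlim
  have hb := hbound (k / N) (k % N) i
  rw [Nat.mod_add_div' k N] at hb
  have hyk := hypos (τ + k) i
  have e : matProd S τ k i j - y τ j / n = y τ j * (d k i / y (τ + k) i) := by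
    rw [hSP]
    simp only [d]
    field_simp
  rw [Real.dist_eq, e, abs_mul, abs_of_pos (hypos τ j), abs_div, abs_of_pos hyk]
  exact mul_le_mul_of_nonneg_left ((div_le_iff₀ hyk).2 hb) (hypos τ j).le
end

section
/- Suppose the graph sequence {𝔾(t)} of the column stochastic matrix sequence {W(t)} is uniformly strongly connected. Let y(t+1) = W(t) y(t), y(0) = 𝟙, and S(t)_{ij} = W(t)_{ij} y_j(t) / y_i(t+1). Then there exist constants C > 0 and μ ∈ [0,1) such that for all i, j ∈ {1,…,n} and all t ≥ 0: | [S(t)⋯S(1)S(0)]_{ij} − 1/n | ≤ C μ^t; i.e., S(t)⋯S(1)S(0) converges to (1/n) 𝟙𝟙ᵀ exponentially fast as t → ∞. -/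
open Filter Finset

section helpers
variable {n : ℕ} {W : ℕ → Matrix (Fin n) (Fin n) ℝ}

theorem mp_succ_apply (τ k : ℕ) (i j : Fin n) :
    matProd W τ (k+1) i j = ∑ l, W (τ+k) i l * matProd W τ k l j := by
  simp [matProd, Matrix.mul_apply]

theorem mp_add (τ a k : ℕ) :
    matProd W τ (a+k) = matProd W (τ+a) k * matProd W τ a := by
  induction k with
  | zero => simp [matProd]
  | succ k ih =>
    rw [← add_assoc, matProd, ih, matProd, Matrix.mul_assoc, add_assoc]

theorem mp_nonneg (h : ∀ t i j, 0 ≤ W t i j) (τ k : ℕ) (i j : Fin n) :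
    0 ≤ matProd W τ k i j := by
  induction k generalizing i with
  | zero => simp only [matProd, Matrix.one_apply]; split_ifs <;> norm_num
  | succ k ih =>
    rw [mp_succ_apply]
    exact Finset.sum_nonneg fun l _ => mul_nonneg (h _ _ _) (ih l)

theorem mp_step (h : ∀ t i j, 0 ≤ W t i j) (τ k : ℕ) (i l j : Fin n)
    (h1 : 0 < W (τ+k) i l) (h2 : 0 < matProd W τ k l j) : 0 < matProd W τ (k+1) i j := by
  rw [mp_succ_apply]
  exact Finset.sum_pos' (fun l _ => mul_nonneg (h _ _ _) (mp_nonneg h _ _ _ _))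
    ⟨l, Finset.mem_univ _, mul_pos h1 h2⟩

theorem mp_lower (h : ∀ t i j, 0 ≤ W t i j) {β : ℝ} (hβ : 0 < β)
    (hWβ : ∀ t i j, 0 < W t i j → β ≤ W t i j) (τ k : ℕ) (i j : Fin n)
    (hp : 0 < matProd W τ k i j) : β ^ k ≤ matProd W τ k i j := by
  induction k generalizing i with
  | zero =>
    simp only [matProd, Matrix.one_apply] at hp ⊢
    split_ifs at hp ⊢ <;> simp_all
  | succ k ih =>
    rw [mp_succ_apply] at hp ⊢
    obtain ⟨l, -, hl⟩ := Finset.exists_lt_of_sum_lt (s := Finset.univ)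
      (f := fun _ => (0:ℝ)) (g := fun l => W (τ+k) i l * matProd W τ k l j) (by simpa using hp)
    have hw : 0 < W (τ+k) i l := by
      rcases (h (τ+k) i l).lt_or_eq with h' | h'
      · exact h'
      · simp [← h'] at hl
    have hm : 0 < matProd W τ k l j := by
      rcases (mp_nonneg h τ k l j).lt_or_eq with h' | h'
      · exact h'
      · simp [← h'] at hl
    calc β ^ (k+1) = β * β ^ k := by ring
      _ ≤ W (τ+k) i l * matProd W τ k l j :=
        mul_le_mul (hWβ _ _ _ hw) (ih l hm) (by positivity) hw.le
      _ ≤ _ := Finset.single_le_sum (f := fun l => W (τ+k) i l * matProd W τ k l j)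
        (fun l _ => mul_nonneg (h _ _ _) (mp_nonneg h _ _ _ _)) (Finset.mem_univ l)

theorem mp_mono (h : ∀ t i j, 0 ≤ W t i j) (hd : ∀ t i, 0 < W t i i) (τ k m : ℕ) (i j : Fin n)
    (hp : 0 < matProd W τ k i j) : 0 < matProd W τ (k+m) i j := by
  induction m with
  | zero => exact hp
  | succ m ih => exact mp_step h τ (k+m) i i j (hd _ _) ih

theorem mp_pos (h : ∀ t i j, 0 ≤ W t i j) (hd : ∀ t i, 0 < W t i i) (L : ℕ)
    (hUSC : ∀ t : ℕ, ∀ i j : Fin n,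
      Relation.TransGen (fun u v : Fin n => ∃ k ∈ Finset.Ico t (t + L), 0 < W k v u) i j)
    (τ : ℕ) (i j : Fin n) : 0 < matProd W τ (n*L) i j := by
  classical
  let R : ℕ → Finset (Fin n) := fun k => Finset.univ.filter fun i => 0 < matProd W τ k i j
  have hR : ∀ k i, i ∈ R k ↔ 0 < matProd W τ k i j := fun k i => by simp [R]
  have hmono : ∀ k m, R k ⊆ R (k+m) := fun k m i hi =>
    (hR _ _).2 (mp_mono h hd τ k m i j ((hR _ _).1 hi))
  have hj : ∀ k, j ∈ R k := fun k => by
    have := hmono 0 k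
    rw [zero_add] at this
    exact this ((hR _ _).2 (by simp [matProd]))
  have key : ∀ k, R (k+L) = R k → R k = Finset.univ := by
    intro k hk
    rw [Finset.eq_univ_iff_forall]
    intro v
    have := hUSC (τ+k) j v
    have step : ∀ u v : Fin n, (∃ s ∈ Finset.Ico (τ+k) (τ+k + L), 0 < W s v u) →
        u ∈ R k → v ∈ R k := by
      rintro u v ⟨s, hs, hw⟩ hu
      rw [Finset.mem_Ico] at hs
      obtain ⟨l, rfl⟩ := Nat.exists_eq_add_of_le hs.1
      have h1 := (hR _ _).1 (hmono k l hu)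
      have h2 := (hR _ _).2 (mp_step h τ (k+l) v u j (by rwa [← add_assoc]) h1)
      obtain ⟨r, hr⟩ := Nat.exists_eq_add_of_le (show k+l+1 ≤ k+L by omega)
      rw [← hk, hr]
      exact hmono _ _ h2
    induction this with
    | single e => exact step _ _ e (hj k)
    | tail _ e ih => exact step _ _ e ih
  have card : ∀ m, R (m*L) = Finset.univ ∨ m + 1 ≤ (R (m*L)).card := by
    intro m
    induction m with
    | zero => right; exact Finset.card_pos.2 ⟨j, hj _⟩
    | succ m ih =>
      have e : (m+1)*L = m*L+L := by ring
      rw [e]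
      by_cases hu : R (m*L) = Finset.univ
      · left
        have := hmono (m*L) L
        rw [hu] at this
        exact Finset.univ_subset_iff.1 this
      · right
        have h1 := ih.resolve_left hu
        have : (R (m*L)).card < (R (m*L+L)).card := Finset.card_lt_card
          ((hmono _ _).ssubset_of_ne fun e => hu (key _ e.symm))
        omega
  rw [← hR]
  rcases card n with h1 | h1
  · rw [h1]; exact Finset.mem_univ _
  · have := Finset.card_le_univ (R (n*L))
    simp at this
    omega

theorem mp_col (hc : ∀ t j, ∑ i, W t i j = 1) (τ k : ℕ) (j : Fin n) :
    ∑ i, matProd W τ k i j = 1 := by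
  induction k with
  | zero => simp [matProd, Matrix.one_apply]
  | succ k ih =>
    simp_rw [mp_succ_apply]
    rw [Finset.sum_comm]
    simp_rw [← Finset.sum_mul, hc, one_mul]
    exact ih

theorem mp_y {y : ℕ → Fin n → ℝ} (hyrec : ∀ t i, y (t + 1) i = ∑ j, W t i j * y t j)
    (τ k : ℕ) (i : Fin n) : y (τ+k) i = ∑ j, matProd W τ k i j * y τ j := by
  induction k generalizing i with
  | zero => simp [matProd, Matrix.one_apply]
  | succ k ih =>
    rw [← add_assoc, hyrec]
    simp_rw [ih, mp_succ_apply, Finset.sum_mul, Finset.mul_sum]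
    rw [Finset.sum_comm]
    simp_rw [mul_assoc]

/-- contraction for one block -/
theorem contr {A : Matrix (Fin n) (Fin n) ℝ} {z z' y y' : Fin n → ℝ} {d B : ℝ}
    (hz : ∀ i, z' i = ∑ j, A i j * z j) (hy : ∀ i, y' i = ∑ j, A i j * y j)
    (hz0 : ∑ j, z j = 0) (hys : ∑ j, y j = n) (hA : ∀ i j, d * y' i ≤ A i j)
    (hB : ∀ j, |z j| ≤ B * y j) (i : Fin n) : |z' i| ≤ (1 - d * n) * B * y' i := by
  have e : z' i = ∑ j, (A i j - d * y' i) * z j := by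
    simp_rw [sub_mul]
    rw [Finset.sum_sub_distrib, ← Finset.mul_sum, hz0, hz]; ring
  rw [e]
  calc _ ≤ ∑ j, |(A i j - d * y' i) * z j| := Finset.abs_sum_le_sum_abs _ _
    _ ≤ ∑ j, (A i j - d * y' i) * (B * y j) := by
      refine Finset.sum_le_sum fun j _ => ?_
      have := hA i j
      rw [abs_mul, abs_of_nonneg (by linarith)]
      exact mul_le_mul_of_nonneg_left (hB j) (by linarith)
    _ = B * ∑ j, A i j * y j - d * y' i * B * ∑ j, y j := by
      simp_rw [sub_mul, Finset.sum_sub_distrib, Finset.mul_sum]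
      congr 1 <;> refine Finset.sum_congr rfl fun j _ => by ring
    _ = _ := by rw [← hy, hys]; ring

end helpers

theorem stmt_13
    (n : ℕ) (hn : 0 < n)
    (W : ℕ → Matrix (Fin n) (Fin n) ℝ)
    (hWnonneg : ∀ t i j, 0 ≤ W t i j)
    (hWcol : ∀ t j, ∑ i, W t i j = 1)
    (hWdiag : ∀ t i, 0 < W t i i)
    (β : ℝ) (hβ : 0 < β)
    (hWβ : ∀ t i j, 0 < W t i j → β ≤ W t i j)
    (L : ℕ) (hL : 0 < L)
    (hUSC : ∀ t : ℕ, ∀ i j : Fin n,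
      Relation.TransGen (fun u v : Fin n => ∃ k ∈ Finset.Ico t (t + L), 0 < W k v u) i j)
    (y : ℕ → Fin n → ℝ)
    (hy0 : ∀ i, y 0 i = 1)
    (hyrec : ∀ t i, y (t + 1) i = ∑ j, W t i j * y t j)
    (S : ℕ → Matrix (Fin n) (Fin n) ℝ)
    (hS : ∀ t i j, S t i j = W t i j * y t j / y (t + 1) i)
    :
    ∃ C : ℝ, 0 < C ∧ ∃ μ : ℝ, 0 ≤ μ ∧ μ < 1 ∧
      ∀ t : ℕ, ∀ i j : Fin n,
        |matProd S 0 (t + 1) i j - 1 / n| ≤ C * μ ^ t := by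
  classical
  have hn' : (0:ℝ) < n := by exact_mod_cast hn
  have hn1 : (1:ℝ) ≤ n := by exact_mod_cast hn
  have hypos : ∀ t i, 0 < y t i := by
    intro t
    induction t with
    | zero => intro i; rw [hy0]; norm_num
    | succ t ih =>
      intro i
      rw [hyrec]
      exact Finset.sum_pos' (fun l _ => mul_nonneg (hWnonneg _ _ _) (ih l).le)
        ⟨i, Finset.mem_univ _, mul_pos (hWdiag _ _) (ih i)⟩
  have hysum : ∀ t, ∑ i, y t i = n := by
    intro t
    induction t with
    | zero => simp [hy0]
    | succ t ih =>
      simp_rw [hyrec]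
      rw [Finset.sum_comm]
      simp_rw [← Finset.sum_mul, hWcol, one_mul]
      exact ih
  have hyle : ∀ t i, y t i ≤ n := fun t i => by
    rw [← hysum t]
    exact Finset.single_le_sum (f := fun i => y t i) (fun l _ => (hypos t l).le) (Finset.mem_univ i)
  have hSP : ∀ k i j, matProd S 0 k i j = matProd W 0 k i j / y k i := by
    intro k
    induction k with
    | zero =>
      intro i j
      simp [matProd, hy0]
    | succ k ih =>
      intro i j
      rw [mp_succ_apply, mp_succ_apply, Finset.sum_div]
      refine Finset.sum_congr rfl fun l _ => ?_
      rw [ih, hS, zero_add]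
      have := (hypos k l).ne'
      have := (hypos (k+1) i).ne'
      field_simp
  set T := n * L with hT
  have hTpos : 0 < T := Nat.mul_pos hn hL
  have hlow : ∀ τ i j, β ^ T ≤ matProd W τ T i j := fun τ i j =>
    mp_lower hWnonneg hβ hWβ τ T i j (mp_pos hWnonneg hWdiag L hUSC τ i j)
  have hc1 : β ^ T ≤ 1 := by
    refine (hlow 0 ⟨0, hn⟩ ⟨0, hn⟩).trans ?_
    rw [← mp_col hWcol 0 T ⟨0, hn⟩]
    exact Finset.single_le_sum (f := fun i => matProd W 0 T i ⟨0, hn⟩)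
      (fun l _ => mp_nonneg hWnonneg _ _ _ _) (Finset.mem_univ _)
  set c : ℝ := β ^ T / 2 with hc
  have hc0 : 0 < c := by positivity
  have hβT : 0 < β ^ T := by positivity
  set q : ℝ := 1 - c with hq
  have hq0 : 0 < q := by linarith
  have hq1 : q < 1 := by linarith
  let z : ℕ → Fin n → Fin n → ℝ := fun k j i => matProd W 0 k i j - y k i / n
  have hzsum : ∀ k j, ∑ i, z k j i = 0 := by
    intro k j
    simp only [z]
    rw [Finset.sum_sub_distrib, mp_col hWcol, ← Finset.sum_div, hysum, div_self hn'.ne', sub_self]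
  have hzrec : ∀ τ k j i, z (τ+k) j i = ∑ l, matProd W τ k i l * z τ j l := by
    intro τ k j i
    simp only [z]
    rw [mp_add, Matrix.mul_apply, mp_y hyrec τ k i, Finset.sum_div, ← Finset.sum_sub_distrib, zero_add]
    refine Finset.sum_congr rfl fun l _ => by ring
  have hz0 : ∀ j i, |z 0 j i| ≤ 1 * y 0 i := by
    intro j i
    simp only [z, hy0, matProd, Matrix.one_apply]
    have : 1 / (n:ℝ) ≤ 1 := by rw [div_le_one hn']; exact hn1
    have : 0 < 1 / (n:ℝ) := by positivity
    rw [abs_le]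
    split_ifs <;> constructor <;> linarith
  have hne : ∀ τ k j B, (∀ i, |z τ j i| ≤ B * y τ i) → ∀ i, |z (τ+k) j i| ≤ B * y (τ+k) i := by
    intro τ k j B hB i
    have := contr (d := 0) (hzrec τ k j) (mp_y hyrec τ k) (hzsum τ j) (hysum τ)
      (fun i j => by rw [zero_mul]; exact mp_nonneg hWnonneg _ _ _ _) hB i
    simpa using this
  have hco : ∀ τ j B, (∀ i, |z τ j i| ≤ B * y τ i) → ∀ i, |z (τ+T) j i| ≤ (q * B) * y (τ+T) i := by
    intro τ j B hB i
    have := contr (d := c / n) (hzrec τ T j) (mp_y hyrec τ T) (hzsum τ j) (hysum τ)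
      (fun i j => by
        refine le_trans ?_ (hlow τ i j)
        calc c / n * y (τ+T) i ≤ c / n * n :=
              mul_le_mul_of_nonneg_left (hyle _ _) (by positivity)
          _ = c := by field_simp
          _ ≤ _ := by linarith) hB i
    rwa [div_mul_cancel₀ _ hn'.ne'] at this
  have hblock : ∀ m j i, |z (m*T) j i| ≤ q ^ m * y (m*T) i := by
    intro m j
    induction m with
    | zero => simpa using hz0 j
    | succ m ih =>
      have e : (m+1)*T = m*T+T := by ring
      rw [e, pow_succ']
      exact hco _ _ _ ih
  set μ : ℝ := q ^ ((1:ℝ) / T) with hμ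
  have hT' : (T:ℝ) ≠ 0 := by exact_mod_cast hTpos.ne'
  have hμ0 : 0 < μ := Real.rpow_pos_of_pos hq0 _
  have hμ1 : μ < 1 := Real.rpow_lt_one hq0.le hq1 (by positivity)
  have hμT : μ ^ T = q := by
    rw [hμ, ← Real.rpow_natCast, ← Real.rpow_mul hq0.le, one_div, inv_mul_cancel₀ hT', Real.rpow_one]
  refine ⟨1 / q, by positivity, μ, hμ0.le, hμ1, ?_⟩
  intro t i j
  have hyp := hypos (t+1) i
  have hdm := Nat.div_add_mod' (t+1) T
  have hlt := Nat.mod_lt (t+1) hTpos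
  set m := (t+1) / T
  have hb := hne (m*T) ((t+1) % T) j _ (hblock m j) i
  rw [hdm] at hb
  have e : matProd S 0 (t+1) i j - 1 / n = z (t+1) j i / y (t+1) i := by
    rw [hSP]
    simp only [z]
    field_simp
  rw [e, abs_div, abs_of_pos hyp, div_le_iff₀ hyp]
  refine hb.trans (mul_le_mul_of_nonneg_right ?_ hyp.le)
  have h1 : μ ^ (m*T+T) ≤ μ ^ t := pow_le_pow_of_le_one hμ0.le hμ1.le (by omega)
  have h2 : μ ^ (m*T+T) = q ^ m * q := by
    rw [pow_add, mul_comm m T, pow_mul, hμT]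
  rw [one_div, ← div_eq_inv_mul, le_div_iff₀ hq0, ← h2]
  exact h1
end

section
/- Consider the push-sum algorithm x(t+1) = W(t) x(t), y(t+1) = W(t) y(t) with y(0) = 𝟙 and arbitrary x(0) ∈ ℝ^n. If the graph sequence {𝔾(t)} is uniformly strongly connected, then there exist constants C > 0 and μ ∈ [0,1) such that for all i ∈ {1,…,n} and all t ≥ 0: | x_i(t)/y_i(t) − (1/n) Σ_{j=1}^n x_j(0) | ≤ C μ^t; i.e., every ratio x_i(t)/y_i(t) converges to the average of the initial values exponentially fast. -/
open Filter Finset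
open scoped InnerProductSpace

noncomputable def PP {n : ℕ} (W : ℕ → Matrix (Fin n) (Fin n) ℝ) (s : ℕ) : ℕ → Matrix (Fin n) (Fin n) ℝ
  | 0 => 1
  | k + 1 => W (s + k) * PP W s k

theorem PP_nonneg {n : ℕ} (W : ℕ → Matrix (Fin n) (Fin n) ℝ) (h : ∀ t i j, 0 ≤ W t i j)
    (s k : ℕ) : ∀ i j, 0 ≤ PP W s k i j := by
  induction k with
  | zero => intro i j; simp only [PP, Matrix.one_apply]; split_ifs <;> norm_num
  | succ k ih =>
    intro i j
    simp only [PP, Matrix.mul_apply]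
    exact Finset.sum_nonneg fun l _ => mul_nonneg (h _ _ _) (ih _ _)

theorem PP_col {n : ℕ} (W : ℕ → Matrix (Fin n) (Fin n) ℝ) (h : ∀ t j, ∑ i, W t i j = 1)
    (s k : ℕ) : ∀ j, ∑ i, PP W s k i j = 1 := by
  induction k with
  | zero => intro j; simp [PP, Matrix.one_apply]
  | succ k ih =>
    intro j
    simp only [PP, Matrix.mul_apply]
    rw [Finset.sum_comm]
    simp only [← Finset.sum_mul, h, one_mul, ih]

theorem PP_apply {n : ℕ} (W : ℕ → Matrix (Fin n) (Fin n) ℝ) (x : ℕ → Fin n → ℝ)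
    (hx : ∀ t i, x (t + 1) i = ∑ j, W t i j * x t j)
    (s k : ℕ) : ∀ i, x (s + k) i = ∑ j, PP W s k i j * x s j := by
  induction k with
  | zero => intro i; simp [PP, Matrix.one_apply]
  | succ k ih =>
    intro i
    rw [← add_assoc, hx]
    simp only [PP, Matrix.mul_apply, ih, Finset.mul_sum, Finset.sum_mul]
    rw [Finset.sum_comm]
    simp only [mul_assoc]

theorem PP_step {n : ℕ} (W : ℕ → Matrix (Fin n) (Fin n) ℝ) (h : ∀ t i j, 0 ≤ W t i j)
    (β : ℝ) (hβ : 0 < β) (hWβ : ∀ t i j, 0 < W t i j → β ≤ W t i j)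
    (s k : ℕ) (u v j : Fin n) (hu : β ^ k ≤ PP W s k u j) (hw : 0 < W (s + k) v u) :
    β ^ (k + 1) ≤ PP W s (k + 1) v j := by
  simp only [PP, Matrix.mul_apply]
  calc β ^ (k + 1) = β * β ^ k := by ring
    _ ≤ W (s + k) v u * PP W s k u j :=
      mul_le_mul (hWβ _ _ _ hw) hu (by positivity) (h _ _ _)
    _ ≤ _ := Finset.single_le_sum (f := fun l => W (s + k) v l * PP W s k l j)
      (fun l _ => mul_nonneg (h _ _ _) (PP_nonneg W h s k _ _)) (Finset.mem_univ u)

theorem PP_pos {n : ℕ} (W : ℕ → Matrix (Fin n) (Fin n) ℝ) (h : ∀ t i j, 0 ≤ W t i j)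
    (hWdiag : ∀ t i, 0 < W t i i)
    (β : ℝ) (hβ : 0 < β) (hWβ : ∀ t i j, 0 < W t i j → β ≤ W t i j)
    (L : ℕ)
    (hUSC : ∀ t : ℕ, ∀ i j : Fin n,
      Relation.TransGen (fun u v : Fin n => ∃ k ∈ Finset.Ico t (t + L), 0 < W k v u) i j)
    (s : ℕ) (i j : Fin n) : β ^ (n * L) ≤ PP W s (n * L) i j := by
  classical
  let S : ℕ → Finset (Fin n) := fun k => Finset.univ.filter fun i => β ^ k ≤ PP W s k i j
  have hS : ∀ k i, i ∈ S k ↔ β ^ k ≤ PP W s k i j := by intro k i; simp [S]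
  have hmono : Monotone S := by
    refine monotone_nat_of_le_succ fun k i hi => ?_
    rw [hS] at hi ⊢
    exact PP_step W h β hβ hWβ s k i i j hi (hWdiag _ _)
  have hj : ∀ k, j ∈ S k := by
    intro k
    refine hmono (Nat.zero_le k) ?_
    rw [hS]; simp [PP]
  have key : ∀ m, S ((m + 1) * L) = S (m * L) → S (m * L) = Finset.univ := by
    intro m hm
    refine Finset.eq_univ_of_forall fun i => ?_
    have hp := hUSC (s + m * L) j i
    induction hp with
    | single hr =>
      obtain ⟨k, hk, hw⟩ := hr
      rw [Finset.mem_Ico] at hk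
      obtain ⟨d, rfl⟩ := Nat.exists_eq_add_of_le (show s ≤ k by omega)
      rw [← hm]
      have h1 := (hS _ _).1 (hj d)
      have h2 := (hS _ _).2 (PP_step W h β hβ hWβ s d _ _ j h1 hw)
      refine hmono ?_ h2
      rw [add_mul]; omega
    | @tail u v _ hr ih =>
      obtain ⟨k, hk, hw⟩ := hr
      rw [Finset.mem_Ico] at hk
      obtain ⟨d, rfl⟩ := Nat.exists_eq_add_of_le (show s ≤ k by omega)
      rw [← hm]
      have h1 := (hS _ _).1 (hmono (show m * L ≤ d by omega) ih)
      have h2 := (hS _ _).2 (PP_step W h β hβ hWβ s d _ _ j h1 hw)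
      refine hmono ?_ h2
      rw [add_mul]; omega
  have hcard : ∀ m, S (m * L) = Finset.univ ∨ m ≤ (S (m * L)).card := by
    intro m
    induction m with
    | zero => right; simp
    | succ m ih =>
      have hle : S (m * L) ⊆ S ((m + 1) * L) := hmono (by rw [add_mul]; omega)
      by_cases he : S ((m + 1) * L) = S (m * L)
      · left; rw [he]; exact key m he
      · right
        have hlt := Finset.card_lt_card (lt_of_le_of_ne hle (Ne.symm he))
        rcases ih with ih | ih
        · exact absurd (Finset.univ_subset_iff.1 (ih ▸ hle)) (fun h => he (h.trans ih.symm))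
        · omega
  have hu : S (n * L) = Finset.univ := by
    rcases hcard n with h | h
    · exact h
    · refine Finset.eq_univ_of_card _ (le_antisymm (Finset.card_le_univ _) ?_)
      simpa using h
  rw [← hS, hu]; exact Finset.mem_univ _

theorem contr_s14 {n : ℕ} (hn : 0 < n) (A : Matrix (Fin n) (Fin n) ℝ) (δ : ℝ) (hδ : 0 ≤ δ)
    (hA : ∀ i j, δ ≤ A i j) (hc : ∀ j, ∑ i, A i j = 1) (D : Fin n → ℝ) (hD : ∑ j, D j = 0) :
    ∑ i, |∑ j, A i j * D j| ≤ (1 - δ) * ∑ j, |D j| := by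
  have hn1 : (1 : ℝ) ≤ n := by exact_mod_cast hn
  have h1 : ∀ i, |∑ j, A i j * D j| ≤ ∑ j, (A i j - δ) * |D j| := by
    intro i
    have : ∑ j, A i j * D j = ∑ j, (A i j - δ) * D j := by
      simp only [sub_mul, Finset.sum_sub_distrib, ← Finset.mul_sum, hD]; simp
    rw [this]
    refine (Finset.abs_sum_le_sum_abs _ _).trans (Finset.sum_le_sum fun j _ => ?_)
    rw [abs_mul, abs_of_nonneg (sub_nonneg.2 (hA i j))]
  refine (Finset.sum_le_sum fun i _ => h1 i).trans ?_
  rw [Finset.sum_comm, Finset.mul_sum]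
  refine Finset.sum_le_sum fun j _ => ?_
  rw [← Finset.sum_mul, Finset.sum_sub_distrib, hc]
  refine mul_le_mul_of_nonneg_right ?_ (abs_nonneg _)
  simp
  nlinarith

theorem expo (a : ℕ → ℝ) (ha : Antitone a) (T : ℕ) (hT : 0 < T) (q : ℝ) (h0 : 0 < q)
    (h1 : q < 1) (hpos : 0 ≤ a 0) (hq : ∀ t, a (t + T) ≤ q * a t) :
    ∃ μ : ℝ, 0 ≤ μ ∧ μ < 1 ∧ ∀ t, a t ≤ a 0 / q * μ ^ t := by
  have hm : (q ^ ((T : ℝ)⁻¹)) ^ T = q := Real.rpow_inv_natCast_pow h0.le hT.ne'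
  have hm0 : 0 ≤ q ^ ((T : ℝ)⁻¹) := by positivity
  have hm1 : q ^ ((T : ℝ)⁻¹) < 1 := Real.rpow_lt_one h0.le h1 (by positivity)
  generalize q ^ ((T : ℝ)⁻¹) = μ at hm hm0 hm1
  refine ⟨μ, hm0, hm1, fun t => ?_⟩
  induction t using Nat.strong_induction_on with
  | _ t ih =>
    by_cases ht : t < T
    · calc a t ≤ a 0 := ha (Nat.zero_le _)
        _ = a 0 / q * μ ^ T := by rw [hm]; field_simp
        _ ≤ _ := mul_le_mul_of_nonneg_left (pow_le_pow_of_le_one hm0 hm1.le ht.le) (by positivity)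
    · obtain ⟨d, rfl⟩ := Nat.exists_eq_add_of_le (not_lt.1 ht)
      rw [add_comm]
      calc a (d + T) ≤ q * a d := hq d
        _ ≤ q * (a 0 / q * μ ^ d) := mul_le_mul_of_nonneg_left (ih d (by omega)) h0.le
        _ = _ := by rw [pow_add, hm]; ring

theorem stmt_14
    (n : ℕ) (hn : 0 < n)
    (W : ℕ → Matrix (Fin n) (Fin n) ℝ)
    (hWnonneg : ∀ t i j, 0 ≤ W t i j)
    (hWcol : ∀ t j, ∑ i, W t i j = 1)
    (hWdiag : ∀ t i, 0 < W t i i)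
    (β : ℝ) (hβ : 0 < β)
    (hWβ : ∀ t i j, 0 < W t i j → β ≤ W t i j)
    (L : ℕ) (hL : 0 < L)
    (hUSC : ∀ t : ℕ, ∀ i j : Fin n,
      Relation.TransGen (fun u v : Fin n => ∃ k ∈ Finset.Ico t (t + L), 0 < W k v u) i j)
    (y : ℕ → Fin n → ℝ)
    (hy0 : ∀ i, y 0 i = 1)
    (hyrec : ∀ t i, y (t + 1) i = ∑ j, W t i j * y t j)
    (x : ℕ → Fin n → ℝ)
    (hxrec : ∀ t i, x (t + 1) i = ∑ j, W t i j * x t j)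
    :
    ∃ C : ℝ, 0 < C ∧ ∃ μ : ℝ, 0 ≤ μ ∧ μ < 1 ∧
      ∀ t : ℕ, ∀ i : Fin n,
        |x t i / y t i - (∑ j, x 0 j) / n| ≤ C * μ ^ t := by
  have hn1 : (1 : ℝ) ≤ n := by exact_mod_cast hn
  have hT : 0 < n * L := Nat.mul_pos hn hL
  have hP := PP_pos W hWnonneg hWdiag β hβ hWβ L hUSC
  set T := n * L with hTdef
  have hβ1 : β ≤ 1 := by
    rw [← hWcol 0 ⟨0, hn⟩]
    exact (hWβ 0 _ _ (hWdiag 0 ⟨0, hn⟩)).trans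
      (Finset.single_le_sum (f := fun i => W 0 i ⟨0, hn⟩) (fun i _ => hWnonneg _ _ _)
        (Finset.mem_univ _))
  have hδ : 0 < β ^ T := by positivity
  have hδ1 : β ^ T ≤ 1 := pow_le_one₀ hβ.le hβ1
  have hsum : ∀ z : ℕ → Fin n → ℝ, (∀ t i, z (t + 1) i = ∑ j, W t i j * z t j) →
      ∀ t, ∑ i, z t i = ∑ i, z 0 i := by
    intro z hz t
    induction t with
    | zero => rfl
    | succ t ih =>
      simp only [hz]
      rw [Finset.sum_comm]
      simp only [← Finset.sum_mul, hWcol, one_mul, ih]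
  have hylow : ∀ t i, β ^ t ≤ y t i := by
    intro t
    induction t with
    | zero => intro i; simp [hy0]
    | succ t ih =>
      intro i
      rw [hyrec]
      calc β ^ (t + 1) = β * β ^ t := by ring
        _ ≤ W t i i * y t i := mul_le_mul (hWβ _ _ _ (hWdiag _ _)) (ih i) (by positivity)
            (hWnonneg _ _ _)
        _ ≤ _ := Finset.single_le_sum (f := fun l => W t i l * y t l)
            (fun l _ => mul_nonneg (hWnonneg _ _ _) ((pow_nonneg hβ.le _).trans (ih l)))
            (Finset.mem_univ i)
  have hyδ : ∀ t i, β ^ T ≤ y t i := by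
    intro t i
    by_cases ht : t < T
    · exact (pow_le_pow_of_le_one hβ.le hβ1 ht.le).trans (hylow t i)
    · obtain ⟨d, rfl⟩ := Nat.exists_eq_add_of_le (not_lt.1 ht)
      rw [add_comm, PP_apply W y hyrec d T i]
      have hs : ∑ j, y d j = n := by rw [hsum y hyrec]; simp [hy0]
      calc β ^ T ≤ β ^ T * n := le_mul_of_one_le_right hδ.le hn1
        _ = ∑ j, β ^ T * y d j := by rw [← Finset.mul_sum, hs]
        _ ≤ _ := Finset.sum_le_sum fun j _ => mul_le_mul_of_nonneg_right (hP d i j)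
            ((pow_nonneg hβ.le _).trans (hylow d j))
  set c := (∑ j, x 0 j) / n with hc
  let D : ℕ → Fin n → ℝ := fun t i => x t i - c * y t i
  have hDrec : ∀ t i, D (t + 1) i = ∑ j, W t i j * D t j := by
    intro t i
    simp only [D, hxrec, hyrec, mul_sub, Finset.sum_sub_distrib, Finset.mul_sum]
    congr 1
    exact Finset.sum_congr rfl fun j _ => by ring
  have hD0 : ∀ t, ∑ j, D t j = 0 := by
    intro t
    rw [hsum D hDrec]
    simp only [D, hy0, Finset.sum_sub_distrib, mul_one, Finset.sum_const, Finset.card_univ,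
      Fintype.card_fin, nsmul_eq_mul, hc]
    field_simp
    ring
  let a : ℕ → ℝ := fun t => ∑ i, |D t i|
  have hanti : Antitone a := by
    refine antitone_nat_of_succ_le fun t => ?_
    have := contr_s14 hn (W t) 0 le_rfl (hWnonneg t) (hWcol t) (D t) (hD0 t)
    simpa [a, hDrec] using this
  have ha0 : ∀ t, 0 ≤ a t := fun t => Finset.sum_nonneg fun i _ => abs_nonneg _
  have hq : ∀ t, a (t + T) ≤ (1 - β ^ T / 2) * a t := by
    intro t
    have := contr_s14 hn (PP W t T) (β ^ T / 2) (by positivity)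
      (fun i j => (half_le_self hδ.le).trans (hP t i j)) (PP_col W hWcol t T) (D t) (hD0 t)
    simpa only [a, PP_apply W D hDrec t T] using this
  obtain ⟨μ, hμ0, hμ1, hμ⟩ := expo a hanti T hT (1 - β ^ T / 2) (by linarith) (by linarith)
    (ha0 0) hq
  have hK : 0 ≤ a 0 / (1 - β ^ T / 2) := div_nonneg (ha0 0) (by linarith)
  refine ⟨a 0 / (1 - β ^ T / 2) / β ^ T + 1, by positivity, μ, hμ0, hμ1, fun t i => ?_⟩
  have hyp : 0 < y t i := hδ.trans_le (hyδ t i)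
  have he : x t i / y t i - c = D t i / y t i := by
    simp only [D]; field_simp
  rw [he, abs_div, abs_of_pos hyp]
  have hDa : |D t i| ≤ a t :=
    Finset.single_le_sum (f := fun i => |D t i|) (fun i _ => abs_nonneg _) (Finset.mem_univ i)
  calc |D t i| / y t i ≤ a t / β ^ T := div_le_div₀ (ha0 t) hDa hδ (hyδ t i)
    _ ≤ (a 0 / (1 - β ^ T / 2) * μ ^ t) / β ^ T := div_le_div_of_nonneg_right (hμ t) hδ.le
    _ = a 0 / (1 - β ^ T / 2) / β ^ T * μ ^ t := by ring
    _ ≤ _ := mul_le_mul_of_nonneg_right (by linarith) (by positivity)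
end

section
/- Suppose the graph sequence {𝔾(t)} of the column stochastic matrix sequence {W(t)} is uniformly strongly connected. Let y(t+1) = W(t) y(t), y(0) = 𝟙, and S(t)_{ij} = W(t)_{ij} y_j(t) / y_i(t+1). Then there exists a constant γ > 0 such that for all i, j ∈ {1,…,n} and all t ≥ 0: S(t)_{ii} ≥ γ; S(t)_{ij} ≥ γ whenever S(t)_{ij} > 0; and Σ_{j=1}^n S(t)_{ij} = 1 (each S(t) is row stochastic). -/
open Filter Finset
open scoped InnerProductSpace

theorem stmt_15
    (n : ℕ) (hn : 0 < n)
    (W : ℕ → Matrix (Fin n) (Fin n) ℝ)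
    (hWnonneg : ∀ t i j, 0 ≤ W t i j)
    (hWcol : ∀ t j, ∑ i, W t i j = 1)
    (hWdiag : ∀ t i, 0 < W t i i)
    (β : ℝ) (hβ : 0 < β)
    (hWβ : ∀ t i j, 0 < W t i j → β ≤ W t i j)
    (L : ℕ) (hL : 0 < L)
    (hUSC : ∀ t : ℕ, ∀ i j : Fin n,
      Relation.TransGen (fun u v : Fin n => ∃ k ∈ Finset.Ico t (t + L), 0 < W k v u) i j)
    (y : ℕ → Fin n → ℝ)
    (hy0 : ∀ i, y 0 i = 1)
    (hyrec : ∀ t i, y (t + 1) i = ∑ j, W t i j * y t j)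
    (S : ℕ → Matrix (Fin n) (Fin n) ℝ)
    (hS : ∀ t i j, S t i j = W t i j * y t j / y (t + 1) i)
    :
    ∃ γ : ℝ, 0 < γ ∧
      (∀ t : ℕ, ∀ i : Fin n, γ ≤ S t i i) ∧
      (∀ t : ℕ, ∀ i j : Fin n, 0 < S t i j → γ ≤ S t i j) ∧
      (∀ t : ℕ, ∀ i : Fin n, ∑ j, S t i j = 1) := by
  have i0 : Fin n := ⟨0, hn⟩
  have hβ1 : β ≤ 1 := by
    calc β ≤ W 0 i0 i0 := hWβ _ _ _ (hWdiag 0 i0)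
      _ ≤ ∑ i, W 0 i i0 :=
        Finset.single_le_sum (f := fun i => W 0 i i0) (fun i _ => hWnonneg 0 i i0) (Finset.mem_univ i0)
      _ = 1 := hWcol 0 i0
  have hy : ∀ t i, 0 ≤ y t i := by
    intro t
    induction t with
    | zero => intro i; rw [hy0]; norm_num
    | succ t ih =>
      intro i; rw [hyrec]
      exact Finset.sum_nonneg fun j _ => mul_nonneg (hWnonneg _ _ _) (ih j)
  have hstep : ∀ t u v, 0 < W t v u → β * y t u ≤ y (t + 1) v := by
    intro t u v h
    rw [hyrec]
    calc β * y t u ≤ W t v u * y t u := mul_le_mul_of_nonneg_right (hWβ _ _ _ h) (hy t u)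
      _ ≤ _ := Finset.single_le_sum (f := fun j => W t v j * y t j)
          (fun j _ => mul_nonneg (hWnonneg _ _ _) (hy t j)) (Finset.mem_univ u)
  have hsum : ∀ t, ∑ i, y t i = n := by
    intro t
    induction t with
    | zero => simp [hy0]
    | succ t ih =>
      simp_rw [hyrec]
      rw [Finset.sum_comm]
      simp_rw [← Finset.sum_mul, hWcol, one_mul]
      exact ih
  have hyle : ∀ t i, y t i ≤ n := by
    intro t i
    rw [← hsum t]
    exact Finset.single_le_sum (f := fun i => y t i) (fun i _ => hy t i) (Finset.mem_univ i)
  have hedge : ∀ t0 s k u v, k = t0 + s → 0 < W k v u → β ^ s ≤ y (t0 + s) u →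
      β ^ (s + 1) ≤ y (t0 + (s + 1)) v := by
    intro t0 s k u v hk h hu
    subst hk
    calc β ^ (s + 1) = β * β ^ s := pow_succ' _ _
      _ ≤ β * y (t0 + s) u := mul_le_mul_of_nonneg_left hu hβ.le
      _ ≤ _ := hstep _ _ _ h
  have hmono : ∀ t0 s d u, β ^ s ≤ y (t0 + s) u → β ^ (s + d) ≤ y (t0 + (s + d)) u := by
    intro t0 s d u h
    induction d with
    | zero => exact h
    | succ d ih => exact hedge t0 (s + d) _ u u rfl (hWdiag _ _) ih
  have hgrow : ∀ t0 m, ∃ A : Finset (Fin n), A.Nonempty ∧ (A = Finset.univ ∨ m < A.card) ∧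
      ∀ u ∈ A, β ^ (m * L) ≤ y (t0 + m * L) u := by
    intro t0 m
    induction m with
    | zero =>
      obtain ⟨j, hj⟩ : ∃ j, 1 ≤ y t0 j := by
        by_contra! hc
        have : ∑ i, y t0 i < ∑ i : Fin n, (1 : ℝ) :=
          Finset.sum_lt_sum_of_nonempty ⟨i0, Finset.mem_univ _⟩ fun i _ => hc i
        rw [hsum] at this
        simp at this
      refine ⟨{j}, by simp, Or.inr (by simp), ?_⟩
      intro u hu
      rw [Finset.mem_singleton] at hu
      subst hu
      simpa using hj
    | succ m ih =>
      obtain ⟨A, hne, hA, hAy⟩ := ih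
      have e : (m + 1) * L = m * L + L := by ring
      rw [e]
      by_cases hu : A = Finset.univ
      · exact ⟨A, hne, Or.inl hu, fun u hu => hmono _ _ _ _ (hAy u hu)⟩
      have hcard := hA.resolve_left hu
      obtain ⟨i, hi⟩ := hne
      obtain ⟨j, hj⟩ : ∃ j, j ∉ A := by
        by_contra! hc
        exact hu (Finset.eq_univ_iff_forall.2 hc)
      obtain ⟨u, v, k, hk, hw, hu1, hv⟩ : ∃ u v k, k ∈ Finset.Ico (t0 + m * L) (t0 + m * L + L) ∧
          0 < W k v u ∧ u ∈ A ∧ v ∉ A := by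
        by_contra! hc
        have key : ∀ x, Relation.TransGen (fun u v : Fin n =>
            ∃ k ∈ Finset.Ico (t0 + m * L) (t0 + m * L + L), 0 < W k v u) i x → x ∈ A := by
          intro x hx
          induction hx with
          | single h => obtain ⟨k, hk, hw⟩ := h; exact hc _ _ k hk hw hi
          | tail _ h ih => obtain ⟨k, hk, hw⟩ := h; exact hc _ _ k hk hw ih
        exact hj (key j (hUSC _ i j))
      refine ⟨insert v A, by simp, Or.inr ?_, ?_⟩
      · rw [Finset.card_insert_of_notMem hv]; omega
      · intro x hx
        rcases Finset.mem_insert.1 hx with rfl | hx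
        · rw [Finset.mem_Ico] at hk
          obtain ⟨d, rfl⟩ : ∃ d, k = t0 + (m * L + d) := ⟨k - (t0 + m * L), by omega⟩
          have h1 := hmono t0 (m * L) d u (hAy u hu1)
          have h2 := hedge t0 _ _ u x rfl hw h1
          have h3 := hmono t0 _ (L - d - 1) x h2
          have e2 : m * L + d + 1 + (L - d - 1) = m * L + L := by omega
          rwa [e2] at h3
        · exact hmono _ _ _ _ (hAy x hx)
  have hlow : ∀ t i, β ^ (n * L) ≤ y t i := by
    intro t i
    rcases le_total t (n * L) with h | h
    · have h1 := hmono 0 0 t i (by simp [hy0])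
      simp only [Nat.zero_add] at h1
      exact (pow_le_pow_of_le_one hβ.le hβ1 h).trans h1
    · obtain ⟨A, _, hA, hAy⟩ := hgrow (t - n * L) n
      have hA' : A = Finset.univ := by
        rcases hA with h | h
        · exact h
        · have := Finset.card_le_univ A
          simp at this
          omega
      have := hAy i (by simp [hA'])
      rwa [Nat.sub_add_cancel h] at this
  have hc : 0 < β ^ (n * L) := pow_pos hβ _
  have hn' : (0 : ℝ) < n := by exact_mod_cast hn
  have hpos : ∀ t i, 0 < y t i := fun t i => hc.trans_le (hlow t i)
  have hmain : ∀ t i j, 0 < W t i j → β * β ^ (n * L) / n ≤ S t i j := by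
    intro t i j h
    rw [hS]
    exact div_le_div₀ (mul_nonneg h.le (hy _ _))
      (mul_le_mul (hWβ _ _ _ h) (hlow _ _) hc.le h.le) (hpos _ _) (hyle _ _)
  refine ⟨β * β ^ (n * L) / n, by positivity, fun t i => hmain t i i (hWdiag t i), ?_, ?_⟩
  · intro t i j h
    apply hmain
    refine lt_of_le_of_ne (hWnonneg _ _ _) fun h0 => ?_
    rw [hS, ← h0] at h
    simp at h
  · intro t i
    simp_rw [hS]
    rw [← Finset.sum_div, ← hyrec]
    exact div_self (hpos _ _).ne'
end

section
/- Suppose the graph sequence {𝔾(t)} of the column stochastic matrix sequence {W(t)} is uniformly strongly connected. Let y(t+1) = W(t) y(t), y(0) = 𝟙, and S(t)_{ij} = W(t)_{ij} y_j(t) / y_i(t+1). Then the sequence of stochastic vectors π(t) := y(t)/n is an absolute probability sequence for {S(t)}, i.e., each π(t) has nonnegative entries summing to one and π(t)ᵀ = π(t+1)ᵀ S(t) for all t ≥ 0 (equivalently, y_j(t)/n = Σ_{i=1}^n (y_i(t+1)/n) S(t)_{ij} for all j, t); moreover it is the unique such sequence: any sequence {q(t)} of stochastic vectors satisfying q(t)ᵀ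 = q(t+1)ᵀ S(t) for all t ≥ 0 equals {y(t)/n}. -/
open Filter Finset
open scoped InnerProductSpace

def auxP {n : ℕ} (W : ℕ → Matrix (Fin n) (Fin n) ℝ) (t : ℕ) : ℕ → Matrix (Fin n) (Fin n) ℝ
  | 0 => 1
  | k + 1 => W (t + k) * auxP W t k

lemma auxP_nonneg {n : ℕ} {W : ℕ → Matrix (Fin n) (Fin n) ℝ}
    (h : ∀ t i j, 0 ≤ W t i j) (t k : ℕ) (i j : Fin n) : 0 ≤ auxP W t k i j := by
  induction k generalizing i with
  | zero =>
    simp only [auxP, Matrix.one_apply]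
    split_ifs <;> norm_num
  | succ k ih =>
    simp only [auxP, Matrix.mul_apply]
    exact Finset.sum_nonneg fun l _ => mul_nonneg (h _ _ _) (ih l)

lemma auxP_col {n : ℕ} {W : ℕ → Matrix (Fin n) (Fin n) ℝ}
    (h : ∀ t j, ∑ i, W t i j = 1) (t k : ℕ) (j : Fin n) : ∑ i, auxP W t k i j = 1 := by
  induction k with
  | zero => simp [auxP, Matrix.one_apply]
  | succ k ih =>
    simp only [auxP, Matrix.mul_apply]
    rw [Finset.sum_comm]
    simp only [← Finset.sum_mul, h, one_mul, ih]

lemma auxP_step {n : ℕ} {W : ℕ → Matrix (Fin n) (Fin n) ℝ}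
    (h : ∀ t i j, 0 ≤ W t i j) (t k : ℕ) (i l j : Fin n) (h1 : 0 < W (t + k) i l)
    (h2 : 0 < auxP W t k l j) : 0 < auxP W t (k + 1) i j := by
  simp only [auxP, Matrix.mul_apply]
  exact lt_of_lt_of_le (mul_pos h1 h2)
    (Finset.single_le_sum (f := fun l => W (t + k) i l * auxP W t k l j)
      (fun l _ => mul_nonneg (h _ _ _) (auxP_nonneg h t k l j)) (Finset.mem_univ l))

lemma auxP_lower {n : ℕ} {W : ℕ → Matrix (Fin n) (Fin n) ℝ}
    (h : ∀ t i j, 0 ≤ W t i j) {β : ℝ} (hβ : 0 < β)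
    (hWβ : ∀ t i j, 0 < W t i j → β ≤ W t i j)
    (t k : ℕ) (i j : Fin n) (hp : 0 < auxP W t k i j) : β ^ k ≤ auxP W t k i j := by
  induction k generalizing i with
  | zero =>
    simp only [auxP, Matrix.one_apply] at hp ⊢
    split_ifs at hp ⊢
    · simp
    · simp at hp
  | succ k ih =>
    simp only [auxP, Matrix.mul_apply] at hp ⊢
    obtain ⟨l, -, hl⟩ := Finset.exists_lt_of_sum_lt (s := Finset.univ) (f := fun _ : Fin n => (0 : ℝ))
      (g := fun l => W (t + k) i l * auxP W t k l j) (by simpa using hp)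
    have hw : 0 < W (t + k) i l := by
      rcases (h (t + k) i l).lt_or_eq with h1 | h1
      · exact h1
      · simp [← h1] at hl
    have hq : 0 < auxP W t k l j := by
      rcases (auxP_nonneg h t k l j).lt_or_eq with h1 | h1
      · exact h1
      · simp [← h1] at hl
    calc β ^ (k + 1) = β * β ^ k := by ring
      _ ≤ W (t + k) i l * auxP W t k l j :=
        mul_le_mul (hWβ _ _ _ hw) (ih l hq) (by positivity) hw.le
      _ ≤ _ := Finset.single_le_sum (f := fun l => W (t + k) i l * auxP W t k l j)
        (fun l _ => mul_nonneg (h _ _ _) (auxP_nonneg h t k l j)) (Finset.mem_univ l)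

lemma auxP_mono {n : ℕ} {W : ℕ → Matrix (Fin n) (Fin n) ℝ}
    (h : ∀ t i j, 0 ≤ W t i j) (hd : ∀ t i, 0 < W t i i) (t k m : ℕ) (hkm : k ≤ m) (i j : Fin n)
    (hp : 0 < auxP W t k i j) : 0 < auxP W t m i j := by
  induction m, hkm using Nat.le_induction with
  | base => exact hp
  | succ m _ ih => exact auxP_step h t m i i j (hd _ _) ih

lemma auxP_pos {n : ℕ} {W : ℕ → Matrix (Fin n) (Fin n) ℝ}
    (h : ∀ t i j, 0 ≤ W t i j) (hd : ∀ t i, 0 < W t i i) (L : ℕ)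
    (hUSC : ∀ t : ℕ, ∀ i j : Fin n,
      Relation.TransGen (fun u v : Fin n => ∃ k ∈ Finset.Ico t (t + L), 0 < W k v u) i j)
    (t : ℕ) (i j : Fin n) : 0 < auxP W t (n * L) i j := by
  classical
  let R : ℕ → Finset (Fin n) := fun k => Finset.univ.filter fun i => 0 < auxP W t k i j
  have hR : ∀ k i, i ∈ R k ↔ 0 < auxP W t k i j := by intro k i; simp [R]
  have hmono : ∀ k m, k ≤ m → R k ⊆ R m := fun k m hkm i hi =>
    (hR _ _).2 (auxP_mono h hd t k m hkm i j ((hR _ _).1 hi))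
  have hj : ∀ k, j ∈ R k := fun k => hmono 0 k (Nat.zero_le _) ((hR _ _).2 (by simp [auxP]))
  have key : ∀ k, R (k + L) = R k → R k = Finset.univ := by
    intro k hk
    have hcl : ∀ u v, (∃ s ∈ Finset.Ico (t + k) (t + k + L), 0 < W s v u) → u ∈ R k → v ∈ R k := by
      rintro u v ⟨s, hs, hw⟩ hu
      rw [Finset.mem_Ico] at hs
      obtain ⟨r, rfl⟩ : ∃ r, s = t + r := ⟨s - t, by omega⟩
      have h1 : u ∈ R r := hmono k r (by omega) hu
      have h2 : v ∈ R (r + 1) := (hR _ _).2 (auxP_step h t r v u j hw ((hR _ _).1 h1))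
      rw [← hk]
      exact hmono (r + 1) (k + L) (by omega) h2
    apply Finset.eq_univ_of_forall
    intro v
    have := hUSC (t + k) j v
    induction this with
    | single h1 => exact hcl _ _ h1 (hj k)
    | tail _ h1 ih => exact hcl _ _ h1 ih
  have hcard : ∀ m, R (m * L) = Finset.univ ∨ m + 1 ≤ (R (m * L)).card := by
    intro m
    induction m with
    | zero => exact Or.inr (Finset.card_pos.2 ⟨j, hj _⟩)
    | succ m ih =>
      have hs : R (m * L) ⊆ R ((m + 1) * L) := hmono _ _ (Nat.mul_le_mul_right _ (by omega))
      rcases ih with ih | ih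
      · left
        rw [ih] at hs
        exact Finset.univ_subset_iff.1 hs
      · by_cases he : R ((m + 1) * L) = R (m * L)
        · left
          rw [he]
          exact key _ (by rw [← he]; congr 1; ring)
        · right
          have := Finset.card_lt_card (hs.ssubset_of_ne (Ne.symm he))
          omega
  rcases hcard n with h1 | h1
  · exact (hR _ _).1 (by rw [h1]; exact Finset.mem_univ i)
  · have := Finset.card_le_univ (R (n * L))
    simp at this
    omega

lemma aux_contract {n : ℕ} (A : Matrix (Fin n) (Fin n) ℝ) (hcol : ∀ j, ∑ i, A i j = 1)
    (δ : ℝ) (hδ : 0 < δ) (hδ1 : δ ≤ 1) (hA : ∀ i j, δ ≤ A i j) (x : Fin n → ℝ) (D : ℝ)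
    (hD : ∀ i j, x i - x j ≤ D) (j k : Fin n) :
    ∑ i, A i j * x i - ∑ i, A i k * x i ≤ (1 - δ) * D := by
  haveI : Nonempty (Fin n) := ⟨j⟩
  obtain ⟨a, ha⟩ := Finite.exists_max x
  obtain ⟨b, hb⟩ := Finite.exists_min x
  have h1 : ∑ i, A i j * (x a - x i) = x a - ∑ i, A i j * x i := by
    simp only [mul_sub, Finset.sum_sub_distrib, ← Finset.sum_mul, hcol, one_mul]
  have h2 : ∑ i, A i k * (x i - x b) = ∑ i, A i k * x i - x b := by
    simp only [mul_sub, Finset.sum_sub_distrib, ← Finset.sum_mul, hcol, one_mul]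
  have h3 : 0 ≤ ∑ i, A i k * (x i - x b) := Finset.sum_nonneg fun i _ =>
    mul_nonneg (hδ.le.trans (hA _ _)) (sub_nonneg.2 (hb i))
  have h4 : A b j * (x a - x b) ≤ ∑ i, A i j * (x a - x i) :=
    Finset.single_le_sum (f := fun i => A i j * (x a - x i))
      (fun i _ => mul_nonneg (hδ.le.trans (hA _ _)) (sub_nonneg.2 (ha i))) (Finset.mem_univ b)
  have h5 : δ * (x a - x b) ≤ A b j * (x a - x b) :=
    mul_le_mul_of_nonneg_right (hA _ _) (sub_nonneg.2 (ha b))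
  have h6 : (1 - δ) * (x a - x b) ≤ (1 - δ) * D :=
    mul_le_mul_of_nonneg_left (hD a b) (by linarith)
  nlinarith

theorem stmt_17
    (n : ℕ) (hn : 0 < n)
    (W : ℕ → Matrix (Fin n) (Fin n) ℝ)
    (hWnonneg : ∀ t i j, 0 ≤ W t i j)
    (hWcol : ∀ t j, ∑ i, W t i j = 1)
    (hWdiag : ∀ t i, 0 < W t i i)
    (β : ℝ) (hβ : 0 < β)
    (hWβ : ∀ t i j, 0 < W t i j → β ≤ W t i j)
    (L : ℕ) (hL : 0 < L)
    (hUSC : ∀ t : ℕ, ∀ i j : Fin n,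
      Relation.TransGen (fun u v : Fin n => ∃ k ∈ Finset.Ico t (t + L), 0 < W k v u) i j)
    (y : ℕ → Fin n → ℝ)
    (hy0 : ∀ i, y 0 i = 1)
    (hyrec : ∀ t i, y (t + 1) i = ∑ j, W t i j * y t j)
    (S : ℕ → Matrix (Fin n) (Fin n) ℝ)
    (hS : ∀ t i j, S t i j = W t i j * y t j / y (t + 1) i)
    :
    (∀ t, (∀ i, 0 ≤ y t i / n) ∧ ∑ i, y t i / n = 1) ∧
    (∀ t : ℕ, ∀ j : Fin n, y t j / n = ∑ i, y (t + 1) i / n * S t i j) ∧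
    (∀ q : ℕ → Fin n → ℝ,
      (∀ t, (∀ i, 0 ≤ q t i) ∧ ∑ i, q t i = 1) →
      (∀ t : ℕ, ∀ j : Fin n, q t j = ∑ i, q (t + 1) i * S t i j) →
      ∀ t i, q t i = y t i / n) := by
  haveI : NeZero n := ⟨hn.ne'⟩
  have hn' : (0 : ℝ) < n := by exact_mod_cast hn
  have hβ1 : β ≤ 1 := by
    have h1 := hWβ 0 0 0 (hWdiag 0 0)
    have h2 := Finset.single_le_sum (f := fun i => W 0 i 0) (fun i _ => hWnonneg 0 i 0)
      (Finset.mem_univ 0)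
    simp only [hWcol] at h2
    linarith
  have hyβ : ∀ t i, β ^ t ≤ y t i := by
    intro t
    induction t with
    | zero => intro i; simp [hy0]
    | succ t ih =>
      intro i
      rw [hyrec]
      calc β ^ (t + 1) = β * β ^ t := by ring
        _ ≤ W t i i * y t i :=
          mul_le_mul (hWβ _ _ _ (hWdiag _ _)) (ih i) (by positivity) (hWnonneg _ _ _)
        _ ≤ _ := Finset.single_le_sum (f := fun j => W t i j * y t j)
          (fun l _ => mul_nonneg (hWnonneg _ _ _) ((pow_nonneg hβ.le t).trans (ih l)))
          (Finset.mem_univ i)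
  have hypos : ∀ t i, 0 < y t i := fun t i => (pow_pos hβ t).trans_le (hyβ t i)
  have hysum : ∀ t, ∑ i, y t i = n := by
    intro t
    induction t with
    | zero => simp [hy0]
    | succ t ih =>
      simp only [hyrec]
      rw [Finset.sum_comm]
      simp only [← Finset.sum_mul, hWcol, one_mul, ih]
  refine ⟨fun t => ⟨fun i => by have := hypos t i; positivity, ?_⟩, ?_, ?_⟩
  · rw [← Finset.sum_div, hysum, div_self hn'.ne']
  · intro t j
    have : ∀ i, y (t + 1) i / n * S t i j = W t i j * (y t j / n) := by
      intro i
      rw [hS]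
      have := (hypos (t + 1) i).ne'
      field_simp
    simp only [this, ← Finset.sum_mul, hWcol, one_mul]
  intro q hq hqS
  set K := n * L with hK
  set δ := β ^ K with hδdef
  have hδ : 0 < δ := pow_pos hβ K
  have hδ1 : δ ≤ 1 := pow_le_one₀ hβ.le hβ1
  have hA : ∀ t i j, δ ≤ auxP W t K i j := fun t i j =>
    auxP_lower hWnonneg hβ hWβ t K i j (auxP_pos hWnonneg hWdiag L hUSC t i j)
  have hyP : ∀ t k i, y (t + k) i = ∑ j, auxP W t k i j * y t j := by
    intro t k
    induction k with
    | zero => intro i; simp [auxP, Matrix.one_apply]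
    | succ k ih =>
      intro i
      rw [← add_assoc, hyrec]
      simp only [ih, auxP, Matrix.mul_apply, Finset.mul_sum, Finset.sum_mul]
      rw [Finset.sum_comm]
      simp only [mul_assoc]
  have hylow : ∀ t i, δ ≤ y t i := by
    intro t i
    rcases le_total t K with h | h
    · exact (pow_le_pow_of_le_one hβ.le hβ1 h).trans (hyβ t i)
    · obtain ⟨s, rfl⟩ := Nat.exists_eq_add_of_le' h
      rw [hyP]
      calc δ ≤ δ * n := le_mul_of_one_le_right hδ.le (by exact_mod_cast hn)
        _ = ∑ j, δ * y s j := by rw [← Finset.mul_sum, hysum]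
        _ ≤ _ := Finset.sum_le_sum fun j _ =>
          mul_le_mul_of_nonneg_right (hA s i j) (hypos s j).le
  let x : ℕ → Fin n → ℝ := fun t i => q t i / y t i
  have hxrec : ∀ t j, x t j = ∑ i, W t i j * x (t + 1) i := by
    intro t j
    have h0 := (hypos t j).ne'
    simp only [x]
    rw [div_eq_iff h0, hqS, Finset.sum_mul]
    refine Finset.sum_congr rfl fun i _ => ?_
    rw [hS]
    ring
  have hxP : ∀ t k j, x t j = ∑ i, auxP W t k i j * x (t + k) i := by
    intro t k
    induction k with
    | zero => intro j; simp [auxP, Matrix.one_apply]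
    | succ k ih =>
      intro j
      rw [ih]
      simp only [hxrec (t + k), auxP, Matrix.mul_apply, Finset.mul_sum, Finset.sum_mul]
      rw [Finset.sum_comm]
      refine Finset.sum_congr rfl fun a _ => Finset.sum_congr rfl fun b _ => ?_
      rw [← add_assoc]
      ring
  have hbound : ∀ m t i j, x t i - x t j ≤ (1 - δ) ^ m * (1 / δ) := by
    intro m
    induction m with
    | zero =>
      intro t i j
      have h1 : x t i ≤ 1 / δ := by
        apply div_le_div₀ zero_le_one _ hδ (hylow t i)
        rw [← (hq t).2]
        exact Finset.single_le_sum (f := fun i => q t i) (fun i _ => (hq t).1 i)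
          (Finset.mem_univ i)
      have h2 : 0 ≤ x t j := div_nonneg ((hq t).1 j) (hypos t j).le
      simp only [pow_zero, one_mul]
      linarith
    | succ m ih =>
      intro t i j
      rw [hxP t K i, hxP t K j, pow_succ', mul_assoc]
      exact aux_contract _ (auxP_col hWcol t K) δ hδ hδ1 (hA t) _ _ (ih (t + K)) i j
  have hle : ∀ t i j, x t i - x t j ≤ 0 := by
    intro t i j
    have hlim : Tendsto (fun m : ℕ => (1 - δ) ^ m * (1 / δ)) atTop (nhds (0 * (1 / δ))) :=
      (tendsto_pow_atTop_nhds_zero_of_lt_one (by linarith) (by linarith)).mul_const _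
    rw [zero_mul] at hlim
    exact ge_of_tendsto' hlim fun m => hbound m t i j
  intro t i
  have hc : ∀ j, q t j = x t i * y t j := by
    intro j
    have h1 : x t j = x t i := le_antisymm (sub_nonpos.1 (hle t j i)) (sub_nonpos.1 (hle t i j))
    rw [← h1]
    exact (div_mul_cancel₀ _ (hypos t j).ne').symm
  have hs := (hq t).2
  simp only [hc] at hs
  rw [← Finset.mul_sum, hysum] at hs
  rw [hc i, eq_div_iff hn'.ne']
  calc x t i * y t i * n = (x t i * n) * y t i := by ring
    _ = y t i := by rw [hs, one_mul]
end
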